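/- arXiv:nlin/0309078 — 2 statements merged into one kernel-verified Lean document; each statement's English description precedes it below -/
import Mathlib

section
/- Define the rational functions of s ∈ ℂ: t(s) = −(2s²+s+1)²(3s−1)³/(2(7s²+1)²) and y(s) = −(s−1)(2s²+s+1)(3s−1)²/(2(7s²+1)(3s²+1)). Then for every s ∈ ℂ such that 7s²+1 ≠ 0, 3s²+1 ≠ 0, t'(s) ≠ 0, t(s) ∉ {0,1}, and y(s) ∉ {0, 1, t(s)}, the pair (t, y) is a parametric solution of the sixth Painlevé equation PVI(α,β,γ,δ) at s with θ-tuple (θ₀, θ₁, θ_t, θ_∞) = (1/7, 1/7, 1/7, 5/7), i.e. α = 2/49, β = −1/98, γ = 1/98, δ = 24/49. -/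
noncomputable def tFun16 : ℂ → ℂ := fun s => -((2*s^2+s+1)^2*(3*s-1)^3)/(2*(7*s^2+1)^2)

noncomputable def yFun16 : ℂ → ℂ := fun s => -((s-1)*(2*s^2+s+1)*(3*s-1)^2)/(2*(7*s^2+1)*(3*s^2+1))

/-!
The symmetry `s ↦ -s` of the curve acts by `(t, y) ↦ (1 - t, 1 - y)`, so the factorizations of `t`
and `y` yield those of `t - 1` and `y - 1`, and `y - t` splits into the same factors. Hence almost
everything cancels on the right-hand side of the Painlevé equation. The slope `dy/dt` is an even
rational function of `s` whose denominator consists of these factors as well, and after clearing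
denominators the equation becomes a single polynomial identity in `s`.
-/

section PainleveVI

variable {K : Type*} [Field K]

/-- The right-hand side of the sixth Painlevé equation, solved for the second derivative, with
parameters `α, β, γ, δ`, as a function of `t`, `y` and the first derivative `p = dy/dt`. -/
def painleveVIRhs (α β γ δ t y p : K) : K :=
  (1 / 2) * (1 / y + 1 / (y - 1) + 1 / (y - t)) * p ^ 2
    - (1 / t + 1 / (t - 1) + 1 / (y - t)) * p
    + (y * (y - 1) * (y - t) / (t ^ 2 * (t - 1) ^ 2)) *
      (α + β * t / y ^ 2 + γ * (t - 1) / (y - 1) ^ 2 + δ * t * (t - 1) / (y - t) ^ 2)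

-- On the curve, `a, b = 2s² ± s + 1`, `c, d = 3s ∓ 1`, `e = 3s² + 1`, `f = 7s² + 1` and
-- `m, n = s ∓ 1`; the hypotheses named `hab` and `hcd` below concern the products `ab` and `cd`.
theorem painleveVIRhs_eq_of_factorizations [NeZero (2 : K)]
    {α β γ δ t y p a b c d e f m n q s : K}
    (ha : a ≠ 0) (hb : b ≠ 0) (hc : c ≠ 0) (hd : d ≠ 0) (he : e ≠ 0) (hf : f ≠ 0)
    (hm : m ≠ 0) (hn : n ≠ 0) (hs : s ≠ 0)
    (ht : t = -(a ^ 2 * c ^ 3) / (2 * f ^ 2)) (ht1 : t - 1 = -(b ^ 2 * d ^ 3) / (2 * f ^ 2))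
    (hy : y = -(m * a * c ^ 2) / (2 * f * e)) (hy1 : y - 1 = -(n * b * d ^ 2) / (2 * f * e))
    (hyt : y - t = s * a * b * c ^ 2 * d ^ 2 / (2 * f ^ 2 * e))
    (hp : p = q * f / (a * b * c * d * e ^ 2)) :
    painleveVIRhs α β γ δ t y p =
      f ^ 3 *
          (q ^ 2 * (f * m * n - s * (n * b * d ^ 2 + m * a * c ^ 2))
            - 2 * q * m * n * e * (a * b * c * d * e - s * (b ^ 2 * d ^ 3 + a ^ 2 * c ^ 3))
            + 2 * f * a * b * c * d *
              (α * s ^ 2 * m ^ 2 * n ^ 2 * c * d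
                + e ^ 2 * (δ * m ^ 2 * n ^ 2 - 2 * β * s ^ 2 * n ^ 2 * d
                  - 2 * γ * s ^ 2 * m ^ 2 * c))) /
        (s * m * n * a ^ 3 * b ^ 3 * c ^ 4 * d ^ 4 * e ^ 3) := by
  have two_ne : (2 : K) ≠ 0 := NeZero.ne 2
  have coeff_p_sq : (1 / 2) * (1 / y + 1 / (y - 1) + 1 / (y - t)) =
      f * e * (f * m * n - s * (n * b * d ^ 2 + m * a * c ^ 2)) /
        (s * m * n * a * b * c ^ 2 * d ^ 2) := by
    rw [hy1, hyt, hy]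
    field_simp
    ring
  have coeff_p : 1 / t + 1 / (t - 1) + 1 / (y - t) =
      2 * f ^ 2 * (a * b * c * d * e - s * (b ^ 2 * d ^ 3 + a ^ 2 * c ^ 3)) /
        (s * a ^ 2 * b ^ 2 * c ^ 3 * d ^ 3) := by
    rw [ht1, hyt, ht]
    field_simp
    ring
  have prefactor : y * (y - 1) * (y - t) / (t ^ 2 * (t - 1) ^ 2) =
      2 * s * m * n * f ^ 4 / (a ^ 2 * b ^ 2 * c ^ 2 * d ^ 2 * e ^ 3) := by
    rw [ht1, hy1, hyt, ht, hy]
    field_simp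
  have bracket :
      α + β * t / y ^ 2 + γ * (t - 1) / (y - 1) ^ 2 + δ * t * (t - 1) / (y - t) ^ 2 =
        α - 2 * β * e ^ 2 / (m ^ 2 * c) - 2 * γ * e ^ 2 / (n ^ 2 * d)
          + δ * e ^ 2 / (s ^ 2 * c * d) := by
    rw [ht1, hy1, hyt, ht, hy]
    field_simp
    ring
  rw [painleveVIRhs, coeff_p_sq, coeff_p, prefactor, bracket, hp]
  field_simp
  ring

theorem painleveVIRhs_numerator_identity [CharZero K] (s : K) :
    (-2 / 7 * (3 + 9 * s ^ 2 - 23 * s ^ 4 - 21 * s ^ 6)) ^ 2 *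
        ((7 * s ^ 2 + 1) * (s - 1) * (s + 1)
          - s * ((s + 1) * (2 * s ^ 2 - s + 1) * (3 * s + 1) ^ 2
            + (s - 1) * (2 * s ^ 2 + s + 1) * (3 * s - 1) ^ 2))
      - 2 * (-2 / 7 * (3 + 9 * s ^ 2 - 23 * s ^ 4 - 21 * s ^ 6)) * (s - 1) * (s + 1) *
        (3 * s ^ 2 + 1) *
        ((2 * s ^ 2 + s + 1) * (2 * s ^ 2 - s + 1) * (3 * s - 1) * (3 * s + 1) * (3 * s ^ 2 + 1)
          - s * ((2 * s ^ 2 - s + 1) ^ 2 * (3 * s + 1) ^ 3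
            + (2 * s ^ 2 + s + 1) ^ 2 * (3 * s - 1) ^ 3))
      + 2 * (7 * s ^ 2 + 1) * (2 * s ^ 2 + s + 1) * (2 * s ^ 2 - s + 1) * (3 * s - 1) *
        (3 * s + 1) *
        (2 / 49 * s ^ 2 * (s - 1) ^ 2 * (s + 1) ^ 2 * (3 * s - 1) * (3 * s + 1)
          + (3 * s ^ 2 + 1) ^ 2 * (24 / 49 * (s - 1) ^ 2 * (s + 1) ^ 2
            - 2 * (-1 / 98) * s ^ 2 * (s + 1) ^ 2 * (3 * s + 1)
            - 2 * (1 / 98) * s ^ 2 * (s - 1) ^ 2 * (3 * s - 1))) =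
    16 / 49 * s ^ 2 * (s ^ 2 - 1) ^ 2 *
      (15 + 160 * s ^ 2 + 1228 * s ^ 4 + 7108 * s ^ 6 + 20043 * s ^ 8 + 24948 * s ^ 10
        + 7938 * s ^ 12) := by
  ring

end PainleveVI

section Curve

variable {s : ℂ}

theorem tFun16_neg (hf : 7 * s ^ 2 + 1 ≠ 0) : tFun16 (-s) = 1 - tFun16 s := by
  simp only [tFun16, neg_sq]
  rw [eq_sub_iff_add_eq, ← add_div, div_eq_one_iff_eq (by simp [hf])]
  ring

theorem yFun16_neg (hf : 7 * s ^ 2 + 1 ≠ 0) (he : 3 * s ^ 2 + 1 ≠ 0) :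
    yFun16 (-s) = 1 - yFun16 s := by
  simp only [yFun16, neg_sq]
  rw [eq_sub_iff_add_eq, ← add_div, div_eq_one_iff_eq (by simp [hf, he])]
  ring

theorem tFun16_sub_one (hf : 7 * s ^ 2 + 1 ≠ 0) :
    tFun16 s - 1 = -((2 * s ^ 2 - s + 1) ^ 2 * (3 * s + 1) ^ 3) / (2 * (7 * s ^ 2 + 1) ^ 2) := by
  rw [← neg_sub, ← tFun16_neg hf, tFun16]
  ring

theorem yFun16_sub_one (hf : 7 * s ^ 2 + 1 ≠ 0) (he : 3 * s ^ 2 + 1 ≠ 0) :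
    yFun16 s - 1 = -((s + 1) * (2 * s ^ 2 - s + 1) * (3 * s + 1) ^ 2) /
      (2 * (7 * s ^ 2 + 1) * (3 * s ^ 2 + 1)) := by
  rw [← neg_sub, ← yFun16_neg hf he, yFun16]
  ring

theorem yFun16_sub_tFun16 (hf : 7 * s ^ 2 + 1 ≠ 0) (he : 3 * s ^ 2 + 1 ≠ 0) :
    yFun16 s - tFun16 s =
      s * (2 * s ^ 2 + s + 1) * (2 * s ^ 2 - s + 1) * (3 * s - 1) ^ 2 * (3 * s + 1) ^ 2 /
        (2 * (7 * s ^ 2 + 1) ^ 2 * (3 * s ^ 2 + 1)) := by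
  rw [yFun16, tFun16, div_sub_div _ _ (by simp [hf, he]) (by simp [hf]),
    div_eq_div_iff (by simp [hf, he]) (by simp [hf, he])]
  ring

theorem hasDerivAt_tFun16 (hf : 7 * s ^ 2 + 1 ≠ 0) :
    HasDerivAt tFun16
      (-7 * (4 * s ^ 4 + 3 * s ^ 2 + 1) * (9 * s ^ 2 - 1) ^ 2 / (2 * (7 * s ^ 2 + 1) ^ 3)) s := by
  have num : HasDerivAt (fun u : ℂ ↦ -((2 * u ^ 2 + u + 1) ^ 2 * (3 * u - 1) ^ 3))
      (-7 * (6 * s ^ 2 + s + 1) * (2 * s ^ 2 + s + 1) * (3 * s - 1) ^ 2) s := by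
    refine DifferentiableAt.hasDerivAt (by fun_prop) |>.congr_deriv ?_
    simp (disch := fun_prop) only [deriv_fun_mul, deriv_fun_pow, deriv_fun_add, deriv_fun_sub,
      deriv.fun_neg', deriv_const', deriv_const_mul_id', deriv_id'']
    ring
  have den : HasDerivAt (fun u : ℂ ↦ 2 * (7 * u ^ 2 + 1) ^ 2) (56 * s * (7 * s ^ 2 + 1)) s := by
    refine DifferentiableAt.hasDerivAt (by fun_prop) |>.congr_deriv ?_
    simp (disch := fun_prop) only [deriv_fun_mul, deriv_fun_pow, deriv_fun_add, deriv_const',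
      deriv_id'']
    ring
  refine (num.fun_div den (by simp [hf])).congr_deriv ?_
  rw [div_eq_div_iff (by simp [hf]) (by simp [hf])]
  ring

theorem hasDerivAt_yFun16 (hf : 7 * s ^ 2 + 1 ≠ 0) (he : 3 * s ^ 2 + 1 ≠ 0) :
    HasDerivAt yFun16
      ((9 * s ^ 2 - 1) * (3 + 9 * s ^ 2 - 23 * s ^ 4 - 21 * s ^ 6) /
        ((7 * s ^ 2 + 1) ^ 2 * (3 * s ^ 2 + 1) ^ 2)) s := by
  have num : HasDerivAt (fun u : ℂ ↦ -((u - 1) * (2 * u ^ 2 + u + 1) * (3 * u - 1) ^ 2))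
      (-2 * (3 * s - 1) * (15 * s ^ 3 - 9 * s ^ 2 + s - 3)) s := by
    refine DifferentiableAt.hasDerivAt (by fun_prop) |>.congr_deriv ?_
    simp (disch := fun_prop) only [deriv_fun_mul, deriv_fun_pow, deriv_fun_add, deriv_fun_sub,
      deriv.fun_neg', deriv_const', deriv_const_mul_id', deriv_id'']
    ring
  have den : HasDerivAt (fun u : ℂ ↦ 2 * (7 * u ^ 2 + 1) * (3 * u ^ 2 + 1))
      (8 * s * (21 * s ^ 2 + 5)) s := by
    refine DifferentiableAt.hasDerivAt (by fun_prop) |>.congr_deriv ?_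
    simp (disch := fun_prop) only [deriv_fun_mul, deriv_fun_pow, deriv_fun_add, deriv_const',
      deriv_id'']
    ring
  refine (num.fun_div den (by simp [hf, he])).congr_deriv ?_
  rw [div_eq_div_iff (by simp [hf, he]) (by simp [hf, he])]
  ring

/-- The slope `dy/dt` of the parametrized curve `(tFun16, yFun16)`, as a rational function of the
parameter. -/
noncomputable def slope16 (s : ℂ) : ℂ :=
  -2 / 7 * (3 + 9 * s ^ 2 - 23 * s ^ 4 - 21 * s ^ 6) * (7 * s ^ 2 + 1) /
    ((4 * s ^ 4 + 3 * s ^ 2 + 1) * (9 * s ^ 2 - 1) * (3 * s ^ 2 + 1) ^ 2)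

theorem deriv_yFun16_div_deriv_tFun16 (hf : 7 * s ^ 2 + 1 ≠ 0) (he : 3 * s ^ 2 + 1 ≠ 0)
    (hab : 4 * s ^ 4 + 3 * s ^ 2 + 1 ≠ 0) (hcd : 9 * s ^ 2 - 1 ≠ 0) :
    deriv yFun16 s / deriv tFun16 s = slope16 s := by
  rw [(hasDerivAt_yFun16 hf he).deriv, (hasDerivAt_tFun16 hf).deriv, slope16, div_div_div_eq,
    div_eq_div_iff (by simp [hf, he, hab, hcd]) (by simp [he, hab, hcd])]
  ring

theorem hasDerivAt_slope16 (he : 3 * s ^ 2 + 1 ≠ 0) (hab : 4 * s ^ 4 + 3 * s ^ 2 + 1 ≠ 0)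
    (hcd : 9 * s ^ 2 - 1 ≠ 0) :
    HasDerivAt slope16
      (-8 * s * (s ^ 2 - 1) *
          (15 + 160 * s ^ 2 + 1228 * s ^ 4 + 7108 * s ^ 6 + 20043 * s ^ 8 + 24948 * s ^ 10
            + 7938 * s ^ 12) /
        (7 * (4 * s ^ 4 + 3 * s ^ 2 + 1) ^ 2 * (9 * s ^ 2 - 1) ^ 2 * (3 * s ^ 2 + 1) ^ 3)) s := by
  have num : HasDerivAt
      (fun u : ℂ ↦ -2 / 7 * (3 + 9 * u ^ 2 - 23 * u ^ 4 - 21 * u ^ 6) * (7 * u ^ 2 + 1))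
      (-8 / 7 * s * (15 + 40 * s ^ 2 - 273 * s ^ 4 - 294 * s ^ 6)) s := by
    refine DifferentiableAt.hasDerivAt (by fun_prop) |>.congr_deriv ?_
    simp (disch := fun_prop) only [deriv_fun_mul, deriv_fun_pow, deriv_fun_add, deriv_fun_sub,
      deriv_const', deriv_id'']
    ring
  have den : HasDerivAt
      (fun u : ℂ ↦ (4 * u ^ 4 + 3 * u ^ 2 + 1) * (9 * u ^ 2 - 1) * (3 * u ^ 2 + 1) ^ 2)
      (8 * s ^ 3 * (3 * s ^ 2 + 1) * (135 * s ^ 4 + 96 * s ^ 2 + 25)) s := by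
    refine DifferentiableAt.hasDerivAt (by fun_prop) |>.congr_deriv ?_
    simp (disch := fun_prop) only [deriv_fun_mul, deriv_fun_pow, deriv_fun_add, deriv_fun_sub,
      deriv_const', deriv_id'']
    ring
  refine (num.fun_div den (by simp [he, hab, hcd])).congr_deriv ?_
  rw [div_eq_div_iff (by simp [he, hab, hcd]) (by simp [he, hab, hcd])]
  ring

theorem hasDerivAt_deriv_yFun16_div_deriv_tFun16 {p' : ℂ} (hf : 7 * s ^ 2 + 1 ≠ 0)
    (he : 3 * s ^ 2 + 1 ≠ 0) (hab : 4 * s ^ 4 + 3 * s ^ 2 + 1 ≠ 0) (hcd : 9 * s ^ 2 - 1 ≠ 0)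
    (hp : HasDerivAt slope16 p' s) :
    HasDerivAt (fun u ↦ deriv yFun16 u / deriv tFun16 u) p' s := by
  refine hp.congr_of_eventuallyEq ?_
  have hf' : ∀ᶠ u : ℂ in nhds s, 7 * u ^ 2 + 1 ≠ 0 := ContinuousAt.eventually_ne (by fun_prop) hf
  have he' : ∀ᶠ u : ℂ in nhds s, 3 * u ^ 2 + 1 ≠ 0 := ContinuousAt.eventually_ne (by fun_prop) he
  have hab' : ∀ᶠ u : ℂ in nhds s, 4 * u ^ 4 + 3 * u ^ 2 + 1 ≠ 0 :=
    ContinuousAt.eventually_ne (by fun_prop) hab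
  have hcd' : ∀ᶠ u : ℂ in nhds s, 9 * u ^ 2 - 1 ≠ 0 := ContinuousAt.eventually_ne (by fun_prop) hcd
  filter_upwards [hf', he', hab', hcd'] with u hfu heu habu hcdu
  exact deriv_yFun16_div_deriv_tFun16 hfu heu habu hcdu

theorem ne_zero_of_deriv_tFun16_ne_zero (hf : 7 * s ^ 2 + 1 ≠ 0) (hdt : deriv tFun16 s ≠ 0) :
    4 * s ^ 4 + 3 * s ^ 2 + 1 ≠ 0 ∧ 9 * s ^ 2 - 1 ≠ 0 := by
  rw [(hasDerivAt_tFun16 hf).deriv] at hdt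
  constructor <;> intro h <;> simp [h] at hdt

theorem painleveVIRhs_tFun16_yFun16_slope16 (hf : 7 * s ^ 2 + 1 ≠ 0) (he : 3 * s ^ 2 + 1 ≠ 0)
    (hab : 4 * s ^ 4 + 3 * s ^ 2 + 1 ≠ 0) (hcd : 9 * s ^ 2 - 1 ≠ 0)
    (hs : s ≠ 0) (hm : s - 1 ≠ 0) (hn : s + 1 ≠ 0) :
    painleveVIRhs (2 / 49) (-1 / 98) (1 / 98) (24 / 49) (tFun16 s) (yFun16 s) (slope16 s) =
      16 * s * (s ^ 2 - 1) * (7 * s ^ 2 + 1) ^ 3 *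
          (15 + 160 * s ^ 2 + 1228 * s ^ 4 + 7108 * s ^ 6 + 20043 * s ^ 8 + 24948 * s ^ 10
            + 7938 * s ^ 12) /
        (49 * (4 * s ^ 4 + 3 * s ^ 2 + 1) ^ 3 * (9 * s ^ 2 - 1) ^ 4 * (3 * s ^ 2 + 1) ^ 3) := by
  have hab_eq : 4 * s ^ 4 + 3 * s ^ 2 + 1 = (2 * s ^ 2 + s + 1) * (2 * s ^ 2 - s + 1) := by ring
  have hcd_eq : 9 * s ^ 2 - 1 = (3 * s - 1) * (3 * s + 1) := by ring
  obtain ⟨ha, hb⟩ := mul_ne_zero_iff.1 (hab_eq ▸ hab)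
  obtain ⟨hc, hd⟩ := mul_ne_zero_iff.1 (hcd_eq ▸ hcd)
  have slope_eq : slope16 s =
      -2 / 7 * (3 + 9 * s ^ 2 - 23 * s ^ 4 - 21 * s ^ 6) * (7 * s ^ 2 + 1) /
        ((2 * s ^ 2 + s + 1) * (2 * s ^ 2 - s + 1) * (3 * s - 1) * (3 * s + 1) *
          (3 * s ^ 2 + 1) ^ 2) := by
    rw [slope16, hab_eq, hcd_eq]
    ring
  refine (painleveVIRhs_eq_of_factorizations ha hb hc hd he hf hm hn hs rfl (tFun16_sub_one hf) rfl
    (yFun16_sub_one hf he) (yFun16_sub_tFun16 hf he) slope_eq).trans ?_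
  rw [painleveVIRhs_numerator_identity, hab_eq, hcd_eq, div_eq_div_iff (by simp [*]) (by simp [*])]
  ring

end Curve

/-- Parametric algebraic solution of the sixth Painlevé equation. -/
theorem stmt_16 (s : ℂ)
    (h1 : 7*s^2+1 ≠ 0)
    (h2 : 3*s^2+1 ≠ 0)
    (hdt : deriv tFun16 s ≠ 0)
    (ht0 : tFun16 s ≠ 0) (ht1 : tFun16 s ≠ 1)
    (hy0 : yFun16 s ≠ 0) (hy1 : yFun16 s ≠ 1) (hyt : yFun16 s ≠ tFun16 s) :
    deriv (fun u => deriv yFun16 u / deriv tFun16 u) s / deriv tFun16 s =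
      (1/2) * (1/(yFun16 s) + 1/(yFun16 s - 1) + 1/(yFun16 s - tFun16 s)) *
          (deriv yFun16 s / deriv tFun16 s)^2
        - (1/(tFun16 s) + 1/(tFun16 s - 1) + 1/(yFun16 s - tFun16 s)) *
          (deriv yFun16 s / deriv tFun16 s)
        + (yFun16 s * (yFun16 s - 1) * (yFun16 s - tFun16 s) /
            ((tFun16 s)^2 * (tFun16 s - 1)^2)) *
          ((2/49 : ℂ) + (-1/98 : ℂ) * tFun16 s / (yFun16 s)^2
            + (1/98 : ℂ) * (tFun16 s - 1) / (yFun16 s - 1)^2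
            + (24/49 : ℂ) * tFun16 s * (tFun16 s - 1) / (yFun16 s - tFun16 s)^2) := by
  obtain ⟨hab, hcd⟩ := ne_zero_of_deriv_tFun16_ne_zero h1 hdt
  have hs : s ≠ 0 := fun h ↦ sub_ne_zero.2 hyt (by rw [yFun16_sub_tFun16 h1 h2, h]; simp)
  have hm : s - 1 ≠ 0 := fun h ↦ hy0 (by simp [yFun16, h])
  have hn : s + 1 ≠ 0 := fun h ↦ sub_ne_zero.2 hy1 (by simp [yFun16_sub_one h1 h2, h])
  have hp := hasDerivAt_deriv_yFun16_div_deriv_tFun16 h1 h2 hab hcd (hasDerivAt_slope16 h2 hab hcd)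
  rw [deriv_yFun16_div_deriv_tFun16 h1 h2 hab hcd]
  refine Eq.trans ?_ (painleveVIRhs_tFun16_yFun16_slope16 h1 h2 hab hcd hs hm hn).symm
  rw [hp.deriv, (hasDerivAt_tFun16 h1).deriv, div_div_div_eq,
    div_eq_div_iff (by simp [h2, hab, hcd]) (by simp [h2, hab, hcd])]
  ring
end

section
/- Let i denote the imaginary unit and √3 the positive real square root of 3, and define the complex constants ρ = (1 − 3i√3)/112, a = (27 − 39i√3)/98, ĉ₀ = (−5697 + 2349i√3)/268912, ĉ₁ = −(513 + 435i√3)/784, b̂₀ = (60507 + 142803i√3)/13176688, b̂₁ = (249399 − 38313i√3)/134456, b̂₂ = (−4293 + 28251i√3)/5488, b̂₃ = −(83 + 129i√3)/28. Then for every x ∈ ℂ the identity ρ·x·(x − a)⁷ − (x − 1)(x² + ĉ₁x + ĉ₀)³ = ρ·(x⁴ + b̂₃x³ + b̂₂x² + b̂₁x + b̂₀)² holds. Equivalently, the degree-8 rational function z(x) = ρ·x·(x − a)⁷/((x − 1)(x² + ĉ₁x + ĉ₀)³) satisfies z(x) − 1 = ρ·(x⁴ + b̂₃x³ + b̂₂x²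 + b̂₁x + b̂₀)²/((x − 1)(x² + ĉ₁x + ĉ₀)³); this is the Belyi function of type R(7+1|2+2+2+2|3+3+1+1) that generates the three irreducible octic transformations of the Gauss hypergeometric function. -/
open Complex

/-!
Both sides are polynomials of degree `8` in `x` with leading coefficient `ρ`, so the identity
amounts to eight equations between the remaining coefficients. With `s = i√3` all constants lie in
`ℤ[s, 1/14]`; after clearing denominators and reducing by `s ^ 2 = -3`, each equation compares two
integer combinations of `1` and `s`.
-/

/-- The equations between the coefficients of `x ^ 0, …, x ^ 7` in
`ρ x (x - a) ^ 7 - (x - 1) (x ^ 2 + c₁ x + c₀) ^ 3 = ρ (x ^ 4 + b₃ x ^ 3 + ⋯ + b₀) ^ 2`,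
that is, the algebraic system satisfied by a Belyi function of type `R(7+1|2+2+2+2|3+3+1+1)`
with its simple zero at `0` and its simple poles at `1` and `∞`. -/
structure IsOcticBelyiSystem {R : Type*} [CommRing R] (ρ a c₀ c₁ b₀ b₁ b₂ b₃ : R) : Prop where
  coeff_zero : c₀ ^ 3 = ρ * b₀ ^ 2
  coeff_one : -ρ * a ^ 7 - (c₀ ^ 3 - 3 * c₀ ^ 2 * c₁) = ρ * (2 * b₀ * b₁)
  coeff_two : 7 * ρ * a ^ 6 - (3 * c₀ ^ 2 * c₁ - (3 * c₀ * c₁ ^ 2 + 3 * c₀ ^ 2)) =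
    ρ * (2 * b₀ * b₂ + b₁ ^ 2)
  coeff_three : -21 * ρ * a ^ 5 - (3 * c₀ * c₁ ^ 2 + 3 * c₀ ^ 2 - (c₁ ^ 3 + 6 * c₀ * c₁)) =
    ρ * (2 * b₀ * b₃ + 2 * b₁ * b₂)
  coeff_four : 35 * ρ * a ^ 4 - (c₁ ^ 3 + 6 * c₀ * c₁ - (3 * c₁ ^ 2 + 3 * c₀)) =
    ρ * (2 * b₀ + 2 * b₁ * b₃ + b₂ ^ 2)
  coeff_five : -35 * ρ * a ^ 3 - (3 * c₁ ^ 2 + 3 * c₀ - 3 * c₁) = ρ * (2 * b₁ + 2 * b₂ * b₃)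
  coeff_six : 21 * ρ * a ^ 2 - (3 * c₁ - 1) = ρ * (2 * b₂ + b₃ ^ 2)
  coeff_seven : -7 * ρ * a - 1 = ρ * (2 * b₃)

theorem IsOcticBelyiSystem.identity {R : Type*} [CommRing R] {ρ a c₀ c₁ b₀ b₁ b₂ b₃ : R}
    (h : IsOcticBelyiSystem ρ a c₀ c₁ b₀ b₁ b₂ b₃) (x : R) :
    ρ * x * (x - a) ^ 7 - (x - 1) * (x ^ 2 + c₁ * x + c₀) ^ 3 =
      ρ * (x ^ 4 + b₃ * x ^ 3 + b₂ * x ^ 2 + b₁ * x + b₀) ^ 2 := by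
  linear_combination h.coeff_zero + x * h.coeff_one + x ^ 2 * h.coeff_two + x ^ 3 * h.coeff_three
    + x ^ 4 * h.coeff_four + x ^ 5 * h.coeff_five + x ^ 6 * h.coeff_six + x ^ 7 * h.coeff_seven

theorem isOcticBelyiSystem_of_sq_eq_neg_three {K : Type*} [Field K] {s : K} (hs : s ^ 2 = -3)
    (h2 : (2 : K) ≠ 0) (h7 : (7 : K) ≠ 0) :
    IsOcticBelyiSystem
      ((1 - 3 * s) / (2 ^ 4 * 7))
      ((27 - 39 * s) / (2 * 7 ^ 2))
      ((-5697 + 2349 * s) / (2 ^ 4 * 7 ^ 5))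
      (-((513 + 435 * s) / (2 ^ 4 * 7 ^ 2)))
      ((60507 + 142803 * s) / (2 ^ 4 * 7 ^ 7))
      ((249399 - 38313 * s) / (2 ^ 3 * 7 ^ 5))
      ((-4293 + 28251 * s) / (2 ^ 4 * 7 ^ 3))
      (-((83 + 129 * s) / (2 ^ 2 * 7))) := by
  constructor <;> field_simp <;> grind

theorem I_mul_ofReal_sqrt_sq {r : ℝ} (hr : 0 ≤ r) : (I * (Real.sqrt r : ℂ)) ^ 2 = -r := by
  rw [mul_pow, I_sq, ← ofReal_pow, Real.sq_sqrt hr, neg_one_mul]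

theorem stmt_19_general {K : Type*} [Field K] {s : K} (hs : s ^ 2 = -3)
    (h2 : (2 : K) ≠ 0) (h7 : (7 : K) ≠ 0) {ρ a c₀ c₁ b₀ b₁ b₂ b₃ : K}
    (hρ : ρ = (1 - 3 * s) / (2 ^ 4 * 7))
    (ha : a = (27 - 39 * s) / (2 * 7 ^ 2))
    (hc₀ : c₀ = (-5697 + 2349 * s) / (2 ^ 4 * 7 ^ 5))
    (hc₁ : c₁ = -((513 + 435 * s) / (2 ^ 4 * 7 ^ 2)))
    (hb₀ : b₀ = (60507 + 142803 * s) / (2 ^ 4 * 7 ^ 7))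
    (hb₁ : b₁ = (249399 - 38313 * s) / (2 ^ 3 * 7 ^ 5))
    (hb₂ : b₂ = (-4293 + 28251 * s) / (2 ^ 4 * 7 ^ 3))
    (hb₃ : b₃ = -((83 + 129 * s) / (2 ^ 2 * 7))) (x : K) :
    ρ * x * (x - a) ^ 7 - (x - 1) * (x ^ 2 + c₁ * x + c₀) ^ 3 =
        ρ * (x ^ 4 + b₃ * x ^ 3 + b₂ * x ^ 2 + b₁ * x + b₀) ^ 2 ∧
      ((x - 1) * (x ^ 2 + c₁ * x + c₀) ^ 3 ≠ 0 →
        ρ * x * (x - a) ^ 7 / ((x - 1) * (x ^ 2 + c₁ * x + c₀) ^ 3) - 1 =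
          ρ * (x ^ 4 + b₃ * x ^ 3 + b₂ * x ^ 2 + b₁ * x + b₀) ^ 2 /
            ((x - 1) * (x ^ 2 + c₁ * x + c₀) ^ 3)) := by
  have system : IsOcticBelyiSystem ρ a c₀ c₁ b₀ b₁ b₂ b₃ := by
    subst hρ ha hc₀ hc₁ hb₀ hb₁ hb₂ hb₃
    exact isOcticBelyiSystem_of_sq_eq_neg_three hs h2 h7
  refine ⟨system.identity x, fun hx => ?_⟩
  rw [div_sub_one hx, system.identity x]

/-- The polynomial identity establishing the octic Belyi function of type
`R(7+1|2+2+2+2|3+3+1+1)` generating the three irreducible octic transformations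
of the Gauss hypergeometric function. -/
theorem stmt_19
    (ρ a c0 c1 b0 b1 b2 b3 : ℂ)
    (hρ : ρ = (1 - 3*I*(Real.sqrt 3 : ℂ))/112)
    (ha : a = (27 - 39*I*(Real.sqrt 3 : ℂ))/98)
    (hc0 : c0 = (-5697 + 2349*I*(Real.sqrt 3 : ℂ))/268912)
    (hc1 : c1 = -((513 + 435*I*(Real.sqrt 3 : ℂ))/784))
    (hb0 : b0 = (60507 + 142803*I*(Real.sqrt 3 : ℂ))/13176688)
    (hb1 : b1 = (249399 - 38313*I*(Real.sqrt 3 : ℂ))/134456)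
    (hb2 : b2 = (-4293 + 28251*I*(Real.sqrt 3 : ℂ))/5488)
    (hb3 : b3 = -((83 + 129*I*(Real.sqrt 3 : ℂ))/28)) :
    ∀ x : ℂ,
      ρ*x*(x - a)^7 - (x - 1)*(x^2 + c1*x + c0)^3 =
        ρ*(x^4 + b3*x^3 + b2*x^2 + b1*x + b0)^2 ∧
      ((x - 1)*(x^2 + c1*x + c0)^3 ≠ 0 →
        ρ*x*(x - a)^7 / ((x - 1)*(x^2 + c1*x + c0)^3) - 1 =
          ρ*(x^4 + b3*x^3 + b2*x^2 + b1*x + b0)^2 /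
            ((x - 1)*(x^2 + c1*x + c0)^3)) := by
  have hs : (I * (Real.sqrt 3 : ℂ)) ^ 2 = -3 := mod_cast I_mul_ofReal_sqrt_sq zero_le_three
  exact stmt_19_general hs two_ne_zero (OfNat.ofNat_ne_zero 7) (by linear_combination hρ)
    (by linear_combination ha) (by linear_combination hc0) (by linear_combination hc1)
    (by linear_combination hb0) (by linear_combination hb1) (by linear_combination hb2)
    (by linear_combination hb3)
end
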